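/- Let p and q be general FNM processes. If p ~sp q, then (νa)p ~sp (νa)q for every a ∈ L. (Structure-preserving bisimilarity is a congruence for restriction.) -/

import Mathlib

/-- Actions of FNM: the invisible action τ, input actions `a ∈ L` and
output actions `ā ∈ L̄` (here `α` plays the role of the finite set `L`). -/
inductive Act (α : Type) where
  | tau : Act α
  | inp : α → Act α
  | out : α → Act α
  deriving DecidableEq

/-- (Open) FNM terms: `0`, the variable `x`, action prefixing `mu.t`, strong
prefixing `a̲.s`, choice `s+s`, constants `C`, parallel `t|t` and
restriction `(νa)p`.  The syntactic categories are carved out below. -/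
inductive FNM (α κ : Type) where
  | nil : FNM α κ
  | var : FNM α κ
  | pref : Act α → FNM α κ → FNM α κ
  | spref : α → FNM α κ → FNM α κ
  | sum : FNM α κ → FNM α κ → FNM α κ
  | const : κ → FNM α κ
  | par : FNM α κ → FNM α κ → FNM α κ
  | res : α → FNM α κ → FNM α κ
  deriving DecidableEq

namespace FNM

variable {α κ : Type}

mutual
  /-- Guarded terms: syntactic category `s ::= 0 | mu.t | a̲.s | s+s`
  (with `t` restriction-free). -/
  def Grd : FNM α κ → Prop
    | .nil => True
    | .var => False
    | .pref _ t => RF t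
    | .spref _ s => Grd s
    | .sum s1 s2 => Grd s1 ∧ Grd s2
    | .const _ => False
    | .par _ _ => False
    | .res _ _ => False
  /-- Restriction-free terms: syntactic category `t ::= q | t|t`, where
  `q ::= s | C | x` is the category of sequential terms. -/
  def RF : FNM α κ → Prop
    | .nil => True
    | .var => True
    | .pref _ t => RF t
    | .spref _ s => Grd s
    | .sum s1 s2 => Grd s1 ∧ Grd s2
    | .const _ => True
    | .par t1 t2 => RF t1 ∧ RF t2
    | .res _ _ => False
end

/-- Sequential terms: `q ::= s | C | x`. -/
def Seq (t : FNM α κ) : Prop :=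
  Grd t ∨ (∃ c, t = FNM.const c) ∨ t = FNM.var

/-- General terms: `p ::= t | (νa)p`. -/
def Gen : FNM α κ → Prop
  | .res _ p => Gen p
  | t => RF t

/-- Closed terms: no occurrence of the variable. -/
def VarFree : FNM α κ → Prop
  | .nil => True
  | .var => False
  | .pref _ t => VarFree t
  | .spref _ s => VarFree s
  | .sum s1 s2 => VarFree s1 ∧ VarFree s2
  | .const _ => True
  | .par t1 t2 => VarFree t1 ∧ VarFree t2
  | .res _ p => VarFree p

/-- Substitution `p{r/x}` of the term `r` for every occurrence of the
variable `x` in `p` (constants are dealt with via the environment). -/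
def subst (r : FNM α κ) : FNM α κ → FNM α κ
  | .nil => .nil
  | .var => r
  | .pref mu t => .pref mu (subst r t)
  | .spref a s => .spref a (subst r s)
  | .sum s1 s2 => .sum (subst r s1) (subst r s2)
  | .const c => .const c
  | .par t1 t2 => .par (subst r t1) (subst r t2)
  | .res a p => .res a (subst r p)

/-- `mu` uses the name `a`. -/
def _root_.Act.uses (a : α) : Act α → Prop
  | .tau => False
  | .inp b => b = a
  | .out b => b = a

/-- `a` occurs free in a term (through an environment `env` giving the body
of each process constant). -/
inductive FreeIn (env : κ → FNM α κ) (a : α) : FNM α κ → Prop where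
  | pref_act {mu : Act α} {t : FNM α κ} : mu.uses a → FreeIn env a (.pref mu t)
  | pref_cont {mu : Act α} {t : FNM α κ} : FreeIn env a t → FreeIn env a (.pref mu t)
  | spref_act {s : FNM α κ} : FreeIn env a (.spref a s)
  | spref_cont {b : α} {s : FNM α κ} : FreeIn env a s → FreeIn env a (.spref b s)
  | sum_l {s1 s2 : FNM α κ} : FreeIn env a s1 → FreeIn env a (.sum s1 s2)
  | sum_r {s1 s2 : FNM α κ} : FreeIn env a s2 → FreeIn env a (.sum s1 s2)
  | par_l {t1 t2 : FNM α κ} : FreeIn env a t1 → FreeIn env a (.par t1 t2)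
  | par_r {t1 t2 : FNM α κ} : FreeIn env a t2 → FreeIn env a (.par t1 t2)
  | res {b : α} {p : FNM α κ} : a ≠ b → FreeIn env a p → FreeIn env a (.res b p)
  | const {c : κ} : FreeIn env a (env c) → FreeIn env a (.const c)

/-- `a` occurs bound (by a restriction) in a term. -/
inductive BoundIn (env : κ → FNM α κ) (a : α) : FNM α κ → Prop where
  | res_here {p : FNM α κ} : BoundIn env a (.res a p)
  | res_in {b : α} {p : FNM α κ} : BoundIn env a p → BoundIn env a (.res b p)
  | pref {mu : Act α} {t : FNM α κ} : BoundIn env a t → BoundIn env a (.pref mu t)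
  | spref {b : α} {s : FNM α κ} : BoundIn env a s → BoundIn env a (.spref b s)
  | sum_l {s1 s2 : FNM α κ} : BoundIn env a s1 → BoundIn env a (.sum s1 s2)
  | sum_r {s1 s2 : FNM α κ} : BoundIn env a s2 → BoundIn env a (.sum s1 s2)
  | par_l {t1 t2 : FNM α κ} : BoundIn env a t1 → BoundIn env a (.par t1 t2)
  | par_r {t1 t2 : FNM α κ} : BoundIn env a t2 → BoundIn env a (.par t1 t2)
  | const {c : κ} : BoundIn env a (env c) → BoundIn env a (.const c)

end FNM

/-- A place of the net `N_FNM`: a sequential (extended) term, rendered as a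
pure sequential term together with the record `ρ : α → Bool` of which names
have been replaced by their restricted counterparts (`ρ a = true` represents
the substitution `{a'/a}`). -/
abbrev Place (α κ : Type) := FNM α κ × (α → Bool)

namespace FNM

variable {α κ : Type} [DecidableEq α] [DecidableEq κ] [Fintype α]

/-- The decomposition function `dec`, mapping (extended) terms to markings:
`dec(0) = θ`, `dec(p|q) = dec(p) ⊕ dec(q)`, `dec((νa)p) = dec(p){a'/a}`, and
a sequential term other than `0` is mapped to a single place. -/
def dec (ρ : α → Bool) : FNM α κ → Multiset (Place α κ)
  | .nil => 0
  | .par t1 t2 => dec ρ t1 + dec ρ t2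
  | .res a p => dec (Function.update ρ a true) p
  | t => {(t, ρ)}

end FNM

/-- Extended visible actions: inputs and outputs, possibly restricted
(`inp a true` represents `a'`, `out a false` represents `ā`, etc.). -/
inductive XAct (α : Type) where
  | inp : α → Bool → XAct α
  | out : α → Bool → XAct α

/-- Labels of net transitions: `τ` is the empty sequence, and otherwise a
sequence of extended actions. -/
abbrev Lbl (α : Type) := List (XAct α)

/-- An extended action carries no restricted name. -/
def XAct.unres {α : Type} : XAct α → Prop
  | .inp _ r => r = false
  | .out _ r => r = false

/-- The label contributed by prefix `mu` under the restriction record `ρ`. -/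
def actL {α : Type} (ρ : α → Bool) : Act α → Lbl α
  | .tau => []
  | .inp a => [XAct.inp a (ρ a)]
  | .out a => [XAct.out a (ρ a)]

/-- The synchronization relation `Sync(σ1, σ2, σ)`: `Sync(α, ᾱ, τ)`,
`Sync(aσ, ā, σ)` and `Sync(ā, aσ, σ)` for `σ ≠ ε` (also on restricted
actions). -/
inductive Sync {α : Type} : Lbl α → Lbl α → Lbl α → Prop where
  | inout (a : α) (r : Bool) : Sync [XAct.inp a r] [XAct.out a r] []
  | outin (a : α) (r : Bool) : Sync [XAct.out a r] [XAct.inp a r] []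
  | seqL (a : α) (r : Bool) (σ : Lbl α) :
      σ ≠ [] → Sync (XAct.inp a r :: σ) [XAct.out a r] σ
  | seqR (a : α) (r : Bool) (σ : Lbl α) :
      σ ≠ [] → Sync [XAct.out a r] (XAct.inp a r :: σ) σ

namespace FNM

variable {α κ : Type} [DecidableEq α] [DecidableEq κ] [Fintype α]

/-- A marking is admissible if for no name `a` both `a` and its restricted
counterpart `a'` occur free in it. -/
def Adm (env : κ → FNM α κ) (m : Multiset (Place α κ)) : Prop :=
  ∀ a : α, ¬ ((∃ p ∈ m, FreeIn env a p.1 ∧ p.2 a = false) ∧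
              (∃ p ∈ m, FreeIn env a p.1 ∧ p.2 a = true))

/-- The net transitions of `N_FNM`, generated by the rules (pref), (sum₁),
(sum₂), (cons), (s-pref) and (s-com). -/
inductive Tr (env : κ → FNM α κ) :
    Multiset (Place α κ) → Lbl α → Multiset (Place α κ) → Prop where
  | pref (ρ : α → Bool) (mu : Act α) (t : FNM α κ) :
      Tr env {(FNM.pref mu t, ρ)} (actL ρ mu) (dec ρ t)
  | sum1 (ρ : α → Bool) (s1 s2 : FNM α κ) (σ : Lbl α) (m : Multiset (Place α κ)) :
      Tr env (dec ρ s1) σ m → Tr env {(FNM.sum s1 s2, ρ)} σ m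
  | sum2 (ρ : α → Bool) (s1 s2 : FNM α κ) (σ : Lbl α) (m : Multiset (Place α κ)) :
      Tr env (dec ρ s2) σ m → Tr env {(FNM.sum s1 s2, ρ)} σ m
  | cons (ρ : α → Bool) (c : κ) (σ : Lbl α) (m : Multiset (Place α κ)) :
      Tr env (dec ρ (env c)) σ m → Tr env {(FNM.const c, ρ)} σ m
  | spref (ρ : α → Bool) (a : α) (s : FNM α κ) (σ : Lbl α) (m : Multiset (Place α κ)) :
      Tr env (dec ρ s) σ m →
      Tr env {(FNM.spref a s, ρ)} (XAct.inp a (ρ a) :: σ) m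
  | scom (m1 m2 m1' m2' : Multiset (Place α κ)) (σ1 σ2 σ : Lbl α) :
      Tr env m1 σ1 m1' → Tr env m2 σ2 m2' →
      Adm env (m1 + m2) → Sync σ1 σ2 σ →
      Tr env (m1 + m2) σ (m1' + m2')

/-- Tritions of the net `N_FNM`: only those whose label contains no
restricted action are kept. -/
def NetTr (env : κ → FNM α κ) (m : Multiset (Place α κ)) (σ : Lbl α)
    (m' : Multiset (Place α κ)) : Prop :=
  Tr env m σ m' ∧ ∀ x ∈ σ, x.unres

/-- First projection of a linking. -/
def pi1 (l : Multiset (Place α κ × Place α κ)) : Multiset (Place α κ) :=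
  l.map Prod.fst

/-- Second projection of a linking. -/
def pi2 (l : Multiset (Place α κ × Place α κ)) : Multiset (Place α κ) :=
  l.map Prod.snd

/-- Structure-preserving bisimulation on the net `N_FNM`. -/
def IsSPB (env : κ → FNM α κ) (R : Set (Multiset (Place α κ × Place α κ))) : Prop :=
  ∀ l ∈ R, ∀ c ≤ l,
    (∀ σ m1, NetTr env (pi1 c) σ m1 →
      ∃ m2 cb, NetTr env (pi2 c) σ m2 ∧
        pi1 cb = m1 ∧ pi2 cb = m2 ∧ l - c + cb ∈ R) ∧
    (∀ σ m2, NetTr env (pi2 c) σ m2 →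
      ∃ m1 cb, NetTr env (pi1 c) σ m1 ∧
        pi1 cb = m1 ∧ pi2 cb = m2 ∧ l - c + cb ∈ R)

/-- `p ~sp q`: some structure-preserving bisimulation contains a linking
projecting on `dec(p)` and `dec(q)`. -/
def SPEq (env : κ → FNM α κ) (p q : FNM α κ) : Prop :=
  ∃ R, IsSPB env R ∧ ∃ l ∈ R,
    pi1 l = dec (fun _ => false) p ∧ pi2 l = dec (fun _ => false) q

end FNM

/-!
Restricting `a` replaces `a` by `a'` in every place of the decomposition, and for restriction-free
places the net transitions are stable under *any* uniform setting of the flag that tells `a`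
from `a'`: prefixes and synchronizations are relabelled consistently, and admissibility survives
because afterwards all places agree at `a`. In the markings reached from a general process all
places agree at `a` to begin with, so setting the flag to `true` can be undone, and the net
transitions of `(νa)p` are exactly those of `p` whose labels do not mention `a`. As linked markings
perform the same labels, setting the flag on both sides of the linkings of an sp-bisimulation
yields an sp-bisimulation.
-/

theorem exists_le_map_eq_of_le_map {β γ : Type*} {f : β → γ} {s : Multiset β} {t : Multiset γ}
    (h : t ≤ s.map f) : ∃ u ≤ s, u.map f = t := by
  induction s, t using Quotient.inductionOn₂ with
  | h s t =>
    obtain ⟨t', ht't, ht's⟩ := Multiset.coe_le.1 h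
    obtain ⟨u, hus, rfl⟩ := List.sublist_map_iff.1 ht's
    exact ⟨u, Multiset.coe_le.2 hus.subperm, Multiset.coe_eq_coe.2 ht't⟩

theorem map_tsub_add_map_of_le {β γ : Type*} [DecidableEq β] [DecidableEq γ] (f : β → γ)
    {s t : Multiset β} (h : t ≤ s) (u : Multiset β) :
    s.map f - t.map f + u.map f = (s - t + u).map f := by
  rw [Multiset.map_add]
  congr 1
  rw [tsub_eq_iff_eq_add_of_le (Multiset.map_le_map h), ← Multiset.map_add, tsub_add_cancel_of_le h]

namespace XAct

variable {α : Type}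

/-- The name in `L` underlying an extended action. -/
def name : XAct α → α
  | inp b _ => b
  | out b _ => b

variable [DecidableEq α] {a : α} {r : Bool} {x : XAct α}

/-- The substitution `{a'/a}` (for `r = true`) or `{a/a'}` (for `r = false`) on extended actions. -/
def setFlag (a : α) (r : Bool) : XAct α → XAct α
  | inp b s => inp b (if b = a then r else s)
  | out b s => out b (if b = a then r else s)

theorem setFlag_of_name_ne (h : x.name ≠ a) : x.setFlag a r = x := by
  cases x <;> simp_all [name, setFlag]

theorem unres.name_ne (hx : x.unres) (h : x.setFlag a true = x) : x.name ≠ a := by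
  rintro rfl
  cases x <;> simp_all [name, setFlag, unres]

end XAct

theorem map_setFlag_of_forall_name_ne {α : Type} [DecidableEq α] {a : α} {σ : Lbl α}
    (h : ∀ x ∈ σ, x.name ≠ a) (r : Bool) : σ.map (XAct.setFlag a r) = σ :=
  (List.map_congr_left fun x hx => XAct.setFlag_of_name_ne (h x hx)).trans σ.map_id

theorem actL_update {α : Type} [DecidableEq α] (ρ : α → Bool) (a : α) (r : Bool) (μ : Act α) :
    actL (Function.update ρ a r) μ = (actL ρ μ).map (XAct.setFlag a r) := by
  cases μ <;> simp [actL, XAct.setFlag, Function.update_apply]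

namespace Sync

variable {α : Type} {σ₁ σ₂ σ : Lbl α}

theorem mem_or_mem (h : Sync σ₁ σ₂ σ) {x : XAct α} (hx : x ∈ σ) : x ∈ σ₁ ∨ x ∈ σ₂ := by
  cases h <;> simp_all

theorem map_setFlag [DecidableEq α] (h : Sync σ₁ σ₂ σ) (a : α) (r : Bool) :
    Sync (σ₁.map (XAct.setFlag a r)) (σ₂.map (XAct.setFlag a r)) (σ.map (XAct.setFlag a r)) := by
  cases h with
  | inout => exact .inout _ _
  | outin => exact .outin _ _
  | seqL _ _ _ hσ => exact .seqL _ _ _ (by simpa using hσ)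
  | seqR _ _ _ hσ => exact .seqR _ _ _ (by simpa using hσ)

end Sync

/-- The substitution `{a'/a}` (for `r = true`) or `{a/a'}` (for `r = false`) on places. -/
def Place.setFlag {α κ : Type} [DecidableEq α] (a : α) (r : Bool) (x : Place α κ) : Place α κ :=
  (x.1, Function.update x.2 a r)

namespace FNM

theorem Grd.rf {α κ : Type} {t : FNM α κ} (h : Grd t) : RF t := by
  cases t <;> simp_all [Grd, RF]

variable {α κ : Type} {a : α} {r : Bool} {m n : Multiset (Place α κ)}

/-- All places of `m` are restriction-free and agree at the name `a`, which is `a'` in all of them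
if `r = true` and unrestricted in all of them if `r = false`. -/
def Flagged (a : α) (r : Bool) (m : Multiset (Place α κ)) : Prop :=
  ∀ x ∈ m, RF x.1 ∧ x.2 a = r

theorem Flagged.rf (hm : Flagged a r m) : ∀ x ∈ m, RF x.1 :=
  fun x hx => (hm x hx).1

theorem Flagged.mono (hn : Flagged a r n) (h : m ≤ n) : Flagged a r m :=
  fun x hx => hn x (Multiset.mem_of_le h hx)

theorem flagged_add : Flagged a r (m + n) ↔ Flagged a r m ∧ Flagged a r n := by
  simp only [Flagged, Multiset.mem_add, or_imp]
  exact forall_and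

theorem flagged_singleton {t : FNM α κ} {ρ : α → Bool} :
    Flagged a r {(t, ρ)} ↔ RF t ∧ ρ a = r := by
  simp [Flagged]

variable [DecidableEq α]

theorem flagged_map_setFlag (hm : ∀ x ∈ m, RF x.1) (a : α) (r : Bool) :
    Flagged a r (m.map (Place.setFlag a r)) := by
  intro x hx
  obtain ⟨y, hy, rfl⟩ := Multiset.mem_map.1 hx
  exact ⟨hm y hy, Function.update_self ..⟩

theorem Flagged.map_setFlag_map_setFlag (hm : Flagged a r m) (s : Bool) :
    (m.map (Place.setFlag a s)).map (Place.setFlag a r) = m := by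
  rw [Multiset.map_map]
  refine (Multiset.map_congr rfl fun x hx => ?_).trans m.map_id
  simp [Place.setFlag, ← (hm x hx).2]

theorem Adm.map_setFlag {env : κ → FNM α κ} (h : Adm env m) (a : α) (r : Bool) :
    Adm env (m.map (Place.setFlag a r)) := by
  simp only [Adm, Multiset.mem_map, exists_exists_and_eq_and, Place.setFlag]
  intro b
  rcases eq_or_ne b a with rfl | hb
  · simp only [Function.update_self]
    rintro ⟨⟨_, _, _, rfl⟩, _, _, _, h'⟩
    exact Bool.false_ne_true h'
  · simpa only [Function.update_of_ne hb] using h b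

theorem RF.mem_dec {t : FNM α κ} (ht : RF t) {ρ : α → Bool} {x : Place α κ} (hx : x ∈ dec ρ t) :
    RF x.1 ∧ x.2 = ρ := by
  induction t with
  | nil => simp [dec] at hx
  | par t u iht ihu =>
    rw [RF] at ht
    rw [dec, Multiset.mem_add] at hx
    exact hx.elim (iht ht.1) (ihu ht.2)
  | res => simp [RF] at ht
  | _ =>
    simp only [dec, Multiset.mem_singleton] at hx
    exact hx ▸ ⟨ht, rfl⟩

theorem RF.flagged_dec {t : FNM α κ} (ht : RF t) {ρ : α → Bool} (h : ρ a = r) :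
    Flagged a r (dec ρ t) :=
  fun _ hx => ⟨(ht.mem_dec hx).1, (ht.mem_dec hx).2 ▸ h⟩

theorem Gen.exists_flagged_dec {p : FNM α κ} (hp : Gen p) (ρ : α → Bool) (a : α) :
    ∃ r, Flagged a r (dec ρ p) := by
  induction p generalizing ρ with
  | res b p ih => exact ih hp _
  | _ => exact ⟨ρ a, RF.flagged_dec hp rfl⟩

theorem RF.dec_update {t : FNM α κ} (ht : RF t) (ρ : α → Bool) (a : α) (r : Bool) :
    dec (Function.update ρ a r) t = (dec ρ t).map (Place.setFlag a r) := by
  induction t with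
  | par t u iht ihu =>
    rw [RF] at ht
    rw [dec, iht ht.1, ihu ht.2, dec, Multiset.map_add]
  | res => simp [RF] at ht
  | _ => rfl

theorem dec_res (ρ : α → Bool) (a : α) (p : FNM α κ) :
    dec ρ (.res a p) = (dec ρ p).map (Place.setFlag a true) := by
  induction p generalizing ρ with
  | par t u iht ihu =>
    simp only [dec, Multiset.map_add] at iht ihu ⊢
    rw [iht, ihu]
  | res b p ih =>
    rw [dec, dec, dec, ← ih, dec]
    rcases eq_or_ne a b with rfl | h
    · simp
    · rw [Function.update_comm h]
  | _ => rfl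

section Transitions

variable {env : κ → FNM α κ} {σ : Lbl α}

theorem Tr.flagged (henv : ∀ c, RF (env c)) (h : Tr env m σ n) (hm : Flagged a r m) :
    Flagged a r n := by
  induction h with
  | pref ρ μ t =>
    rw [flagged_singleton, RF] at hm
    exact hm.1.flagged_dec hm.2
  | sum1 ρ s t _ _ _ ih =>
    rw [flagged_singleton, RF] at hm
    exact ih (hm.1.1.rf.flagged_dec hm.2)
  | sum2 ρ s t _ _ _ ih =>
    rw [flagged_singleton, RF] at hm
    exact ih (hm.1.2.rf.flagged_dec hm.2)
  | cons ρ c _ _ _ ih => exact ih ((henv c).flagged_dec (flagged_singleton.1 hm).2)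
  | spref ρ b s _ _ _ ih =>
    rw [flagged_singleton, RF] at hm
    exact ih (hm.1.rf.flagged_dec hm.2)
  | scom _ _ _ _ _ _ _ _ _ _ _ ih₁ ih₂ =>
    rw [flagged_add] at hm ⊢
    exact ⟨ih₁ hm.1, ih₂ hm.2⟩

theorem Tr.setFlag_eq_of_mem (henv : ∀ c, RF (env c)) (h : Tr env m σ n) (hm : Flagged a r m)
    {x : XAct α} (hx : x ∈ σ) : x.setFlag a r = x := by
  induction h with
  | pref ρ μ t =>
    rw [flagged_singleton] at hm
    cases μ <;> simp_all [actL, XAct.setFlag]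
  | sum1 ρ s t σ _ _ ih =>
    rw [flagged_singleton, RF] at hm
    exact ih (hm.1.1.rf.flagged_dec hm.2) hx
  | sum2 ρ s t σ _ _ ih =>
    rw [flagged_singleton, RF] at hm
    exact ih (hm.1.2.rf.flagged_dec hm.2) hx
  | cons ρ c σ _ _ ih => exact ih ((henv c).flagged_dec (flagged_singleton.1 hm).2) hx
  | spref ρ b s σ _ _ ih =>
    rw [flagged_singleton, RF] at hm
    rcases List.mem_cons.1 hx with rfl | hx
    · simp +contextual [XAct.setFlag, ← hm.2]
    · exact ih (hm.1.rf.flagged_dec hm.2) hx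
  | scom _ _ _ _ _ _ _ _ _ _ hs ih₁ ih₂ =>
    rw [flagged_add] at hm
    exact (hs.mem_or_mem hx).elim (ih₁ hm.1) (ih₂ hm.2)

theorem Tr.map_setFlag (henv : ∀ c, RF (env c)) (h : Tr env m σ n) (hm : ∀ x ∈ m, RF x.1)
    (a : α) (r : Bool) :
    Tr env (m.map (Place.setFlag a r)) (σ.map (XAct.setFlag a r))
      (n.map (Place.setFlag a r)) := by
  induction h with
  | pref ρ μ t =>
    have ht : RF (.pref μ t) := hm _ (Multiset.mem_singleton_self _)
    rw [RF] at ht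
    rw [← actL_update, ← ht.dec_update]
    exact .pref _ μ t
  | sum1 ρ s t σ n _ ih =>
    have hst : RF (.sum s t) := hm _ (Multiset.mem_singleton_self _)
    rw [RF] at hst
    have hs := hst.1.rf
    exact .sum1 _ s t _ _ (hs.dec_update ρ a r ▸ ih fun _ hx => (hs.mem_dec hx).1)
  | sum2 ρ s t σ n _ ih =>
    have hst : RF (.sum s t) := hm _ (Multiset.mem_singleton_self _)
    rw [RF] at hst
    have ht := hst.2.rf
    exact .sum2 _ s t _ _ (ht.dec_update ρ a r ▸ ih fun _ hx => (ht.mem_dec hx).1)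
  | cons ρ c σ n _ ih =>
    exact .cons _ c _ _ ((henv c).dec_update ρ a r ▸ ih fun _ hx => ((henv c).mem_dec hx).1)
  | spref ρ b s σ n _ ih =>
    have hs : RF (.spref b s) := hm _ (Multiset.mem_singleton_self _)
    rw [RF] at hs
    have htr := Tr.spref _ b s _ _ (hs.rf.dec_update ρ a r ▸ ih fun _ hx => (hs.rf.mem_dec hx).1)
    rwa [Function.update_apply] at htr
  | scom m₁ m₂ _ _ _ _ _ _ _ hadm hs ih₁ ih₂ =>
    have hadm' := hadm.map_setFlag a r
    rw [Multiset.map_add] at hadm'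
    rw [Multiset.map_add, Multiset.map_add]
    exact .scom _ _ _ _ _ _ _ (ih₁ fun x hx => hm x (Multiset.mem_add.2 (.inl hx)))
      (ih₂ fun x hx => hm x (Multiset.mem_add.2 (.inr hx))) hadm' (hs.map_setFlag a r)

theorem NetTr.map_setFlag (henv : ∀ c, RF (env c)) (h : NetTr env m σ n)
    (hm : ∀ x ∈ m, RF x.1) (hσ : ∀ x ∈ σ, x.name ≠ a) (r : Bool) :
    NetTr env (m.map (Place.setFlag a r)) σ (n.map (Place.setFlag a r)) := by
  have htr := h.1.map_setFlag henv hm a r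
  rw [map_setFlag_of_forall_name_ne hσ] at htr
  exact ⟨htr, h.2⟩

theorem NetTr.name_ne (henv : ∀ c, RF (env c)) (h : NetTr env m σ n) (hm : Flagged a true m) :
    ∀ x ∈ σ, x.name ≠ a :=
  fun x hx => (h.2 x hx).name_ne (h.1.setFlag_eq_of_mem henv hm hx)

theorem NetTr.exists_of_map_setFlag (henv : ∀ c, RF (env c)) (hm : Flagged a r m)
    (h : NetTr env (m.map (Place.setFlag a true)) σ n) :
    ∃ n', n'.map (Place.setFlag a true) = n ∧ NetTr env m σ n' ∧ ∀ x ∈ σ, x.name ≠ a := by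
  have hm' := flagged_map_setFlag hm.rf a true
  have hσ := h.name_ne henv hm'
  have hback := h.map_setFlag henv hm'.rf hσ r
  rw [hm.map_setFlag_map_setFlag] at hback
  exact ⟨_, (h.1.flagged henv hm').map_setFlag_map_setFlag r, hback, hσ⟩

end Transitions

section Linkings

variable {R : Set (Multiset (Place α κ × Place α κ))} {r₁ r₂ : Bool}

/-- The image of a linking of `p` and `q` under restriction: `{a'/a}` is applied to both components
of every link. -/
def restrictLinking (a : α) (l : Multiset (Place α κ × Place α κ)) :
    Multiset (Place α κ × Place α κ) :=
  l.map (Prod.map (Place.setFlag a true) (Place.setFlag a true))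

theorem pi1_restrictLinking (a : α) (l : Multiset (Place α κ × Place α κ)) :
    pi1 (restrictLinking a l) = (pi1 l).map (Place.setFlag a true) := by
  simp [pi1, restrictLinking]

theorem pi2_restrictLinking (a : α) (l : Multiset (Place α κ × Place α κ)) :
    pi2 (restrictLinking a l) = (pi2 l).map (Place.setFlag a true) := by
  simp [pi2, restrictLinking]

/-- The candidate bisimulation for `(νa)p` and `(νa)q` obtained from one, `R`, for `p` and `q`. Only
linkings between markings flagged at `a` are restricted; the two flags may differ, since `a` can
already be restricted in just one of the two processes. -/
def restrictRel (a : α) (r₁ r₂ : Bool) (R : Set (Multiset (Place α κ × Place α κ))) :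
    Set (Multiset (Place α κ × Place α κ)) :=
  restrictLinking a '' {l ∈ R | Flagged a r₁ (pi1 l) ∧ Flagged a r₂ (pi2 l)}

variable [DecidableEq κ] [Fintype α] {env : κ → FNM α κ}

theorem restrictLinking_sub_add_mem {l c d : Multiset (Place α κ × Place α κ)}
    (h₁ : Flagged a r₁ (pi1 l)) (h₂ : Flagged a r₂ (pi2 l)) (hc : c ≤ l)
    (hd₁ : Flagged a r₁ (pi1 d)) (hd₂ : Flagged a r₂ (pi2 d)) (hR : l - c + d ∈ R) :
    restrictLinking a l - restrictLinking a c + restrictLinking a d ∈ restrictRel a r₁ r₂ R := by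
  refine ⟨l - c + d, ⟨hR, ?_, ?_⟩, (map_tsub_add_map_of_le _ hc d).symm⟩
  · rw [pi1, Multiset.map_add]
    exact flagged_add.2 ⟨h₁.mono (Multiset.map_le_map tsub_le_self), hd₁⟩
  · rw [pi2, Multiset.map_add]
    exact flagged_add.2 ⟨h₂.mono (Multiset.map_le_map tsub_le_self), hd₂⟩

theorem IsSPB.restrictRel (henv : ∀ c, RF (env c)) (hR : IsSPB env R) (a : α) (r₁ r₂ : Bool) :
    IsSPB env (restrictRel a r₁ r₂ R) := by
  rintro _ ⟨l, ⟨hl, h₁, h₂⟩, rfl⟩ c' hc'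
  obtain ⟨c, hc, rfl⟩ : ∃ c ≤ l, restrictLinking a c = c' := exists_le_map_eq_of_le_map hc'
  have hc₁ : Flagged a r₁ (pi1 c) := h₁.mono (Multiset.map_le_map hc)
  have hc₂ : Flagged a r₂ (pi2 c) := h₂.mono (Multiset.map_le_map hc)
  rw [pi1_restrictLinking, pi2_restrictLinking]
  constructor
  · intro σ _ htr
    obtain ⟨_, rfl, htr₁, hσ⟩ := htr.exists_of_map_setFlag henv hc₁
    obtain ⟨_, d, htr₂, rfl, rfl, hd⟩ := (hR l hl c hc).1 σ _ htr₁
    exact ⟨_, restrictLinking a d, htr₂.map_setFlag henv hc₂.rf hσ true,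
      pi1_restrictLinking a d, pi2_restrictLinking a d, restrictLinking_sub_add_mem h₁ h₂ hc
        (htr₁.1.flagged henv hc₁) (htr₂.1.flagged henv hc₂) hd⟩
  · intro σ _ htr
    obtain ⟨_, rfl, htr₂, hσ⟩ := htr.exists_of_map_setFlag henv hc₂
    obtain ⟨_, d, htr₁, rfl, rfl, hd⟩ := (hR l hl c hc).2 σ _ htr₂
    exact ⟨_, restrictLinking a d, htr₁.map_setFlag henv hc₁.rf hσ true,
      pi1_restrictLinking a d, pi2_restrictLinking a d, restrictLinking_sub_add_mem h₁ h₂ hc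
        (htr₁.1.flagged henv hc₁) (htr₂.1.flagged henv hc₂) hd⟩

end Linkings

end FNM

open FNM in
theorem speq_congr_res_general {α κ : Type} [DecidableEq α] [DecidableEq κ] [Fintype α]
    {env : κ → FNM α κ} (henv : ∀ c, RF (env c)) {p q : FNM α κ} (hp : Gen p) (hq : Gen q)
    (h : SPEq env p q) (a : α) : SPEq env (.res a p) (.res a q) := by
  obtain ⟨R, hR, l, hl, hpl, hql⟩ := h
  obtain ⟨r₁, h₁⟩ := hp.exists_flagged_dec (fun _ => false) a
  obtain ⟨r₂, h₂⟩ := hq.exists_flagged_dec (fun _ => false) a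
  refine ⟨restrictRel a r₁ r₂ R, hR.restrictRel henv a r₁ r₂, restrictLinking a l,
    ⟨l, ⟨hl, hpl ▸ h₁, hql ▸ h₂⟩, rfl⟩, ?_, ?_⟩
  · rw [pi1_restrictLinking, hpl, dec_res]
  · rw [pi2_restrictLinking, hql, dec_res]

open FNM in
/-- structure-preserving bisimilarity is a congruence for
restriction: for general FNM processes `p, q` with `p ~sp q`,
`(νa)p ~sp (νa)q` for every `a ∈ L`. -/
theorem speq_congr_res {α κ : Type} [DecidableEq α] [DecidableEq κ]
    [Fintype α] [Finite κ]
    (env : κ → FNM α κ) (henv : ∀ c, Grd (env c) ∧ VarFree (env c))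
    (p q : FNM α κ) (hp : Gen p) (hq : Gen q)
    (hpv : VarFree p) (hqv : VarFree q)
    (h : SPEq env p q) :
    ∀ a : α, SPEq env (FNM.res a p) (FNM.res a q) :=
  fun a => speq_congr_res_general (fun c => (henv c).1.rf) hp hq h a
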